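/- Let d≥1. Then for every d'>d and every ε>0, with high probability over the choice of G∼G(n,d/n), the d'-branching value of every vertex of G is at most ε·log n. -/

import Mathlib

/-!
A simple path of length `ℓ` contributes `d' ^ (-ℓ)` to a branching value, and in a sparse random
graph simple paths are, up to a bounded factor, counted by their endpoints. Fix `d < d₁ < d'` and a
depth `L` of order `(log n) ^ (1/3)`.

*Local structure.* With high probability every set of at most `4 (L + 1)` vertices spans at most as
many edges as it has vertices (`dense_sum_le`, a first moment computation: the expected number of
violations is `exp (O (L ^ 2)) / n`). In such a graph two vertices are joined by at most three
simple paths of length at most `L`: four of them would lie in a small connected subgraph, which has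
at most one cycle and hence at most three simple paths between two vertices
(`card_paths_le_three`). So the number of short paths from `v`, discounted at rate `d₁`, is at most
three times the number of vertices near `v`, discounted by their distance to `v`
(`sum_numPaths_le`).

*Growth of balls.* The discounted size of the ball around `v` is the value `phi` of a breadth-first
exploration, in which each layer is dominated by a sum of binomial variables of mean at most `d`.
Since `d < d₁`, all exponential moments of the discounted size are bounded uniformly in `n` and `L`
(`mgf_bound`). A Chernoff bound with parameter `12 / ε` and a union bound over the `n` vertices show
that the discounted paths of length at most `L` from any vertex sum to at most `(ε / 2) log n`
(`failure_le`).

*Long paths.* Consequently at most `(ε / 2) (log n) d₁ ^ L ≤ d' ^ L / 2` simple paths of length `L`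
start at any vertex, because `L` is large compared with `log log n`. The number of simple paths of
length `k + L` from `v` is at most the number of those of length `k` times the maximal number of
those of length `L`, so the contributions of consecutive blocks of `L` lengths decay geometrically
with ratio `1 / 2`, and the branching value is at most twice the contribution of paths shorter than
`L` (`branchingValue_le`), that is, at most `ε log n`.
-/

open Classical Filter

/-- The degree of a vertex. -/
noncomputable def deg {V : Type*} (G : SimpleGraph V) (v : V) : ℕ :=
  Nat.card {u : V // G.Adj v u}

/-- The number of edges of a graph. -/
noncomputable def edgeCount {V : Type*} (G : SimpleGraph V) : ℕ :=
  Nat.card G.edgeSet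

/-- The probability that the Erdős–Rényi random graph `G(n,p)` satisfies property `P`:
each of the `n(n-1)/2` possible edges is present independently with probability `p`. -/
noncomputable def erProb (n : ℕ) (p : ℝ) (P : SimpleGraph (Fin n) → Prop) : ℝ :=
  ∑ G : SimpleGraph (Fin n),
    (if P G then p ^ edgeCount G * (1 - p) ^ (n.choose 2 - edgeCount G) else 0)

/-- `N_{v,ℓ}`: the number of simple paths with exactly `ℓ+1` vertices starting at `v`. -/
noncomputable def numPaths {V : Type*} (G : SimpleGraph V) (v : V) (ℓ : ℕ) : ℕ :=
  Nat.card {p : (u : V) × G.Walk v u // p.2.IsPath ∧ p.2.length = ℓ}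

/-- The `d`-branching value `S_v = Σ_{ℓ ≥ 0} N_{v,ℓ}/d^ℓ` of a vertex `v`. -/
noncomputable def branchingValue {V : Type*} (G : SimpleGraph V) (d : ℝ) (v : V) : ℝ :=
  ∑' ℓ : ℕ, (numPaths G v ℓ : ℝ) / d ^ ℓ

/-! ### Random subsets of a finite set -/

/-- The expectation of `f T`, where `T` is the random subset of `S` containing each element of `S`
independently with probability `p`. -/
noncomputable def bexp {α : Type*} (p : ℝ) (S : Finset α) (f : Finset α → ℝ) : ℝ :=
  ∑ T ∈ S.powerset, p ^ T.card * (1 - p) ^ (S.card - T.card) * f T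

section bexp

variable {α : Type*} {p : ℝ}

/-- Conditioning on whether the single element `e` is selected. -/
lemma bexp_insert [DecidableEq α] {S : Finset α} {e : α} (he : e ∉ S) (f : Finset α → ℝ) :
    bexp p (insert e S) f = (1 - p) * bexp p S f + p * bexp p S (fun T => f (insert e T)) := by
  unfold bexp
  rw [Finset.sum_powerset_insert he, Finset.mul_sum, Finset.mul_sum]
  congr 1
  · refine Finset.sum_congr rfl fun T hT => ?_
    have hc := Finset.card_le_card (Finset.mem_powerset.1 hT)
    rw [Finset.card_insert_of_notMem he, Nat.succ_sub hc, pow_succ]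
    ring
  · refine Finset.sum_congr rfl fun T hT => ?_
    have heT : e ∉ T := fun h => he (Finset.mem_powerset.1 hT h)
    rw [Finset.card_insert_of_notMem he, Finset.card_insert_of_notMem heT,
      Nat.add_sub_add_right, pow_succ]
    ring

/-- Independence: a random subset of a disjoint union is sampled part by part. -/
lemma bexp_union [DecidableEq α] {S₁ S₂ : Finset α} (h : Disjoint S₁ S₂) (f : Finset α → ℝ) :
    bexp p (S₁ ∪ S₂) f = bexp p S₁ (fun T₁ => bexp p S₂ (fun T₂ => f (T₁ ∪ T₂))) := by
  induction S₁ using Finset.induction_on generalizing f with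
  | empty => simp [bexp]
  | insert e S₁ he ih =>
    rw [Finset.disjoint_insert_left] at h
    have he' : e ∉ S₁ ∪ S₂ := by simp [he, h.1]
    rw [Finset.insert_union, bexp_insert he', bexp_insert he, ih h.2, ih h.2]
    simp only [Finset.insert_union]

lemma bexp_mono (hp0 : 0 ≤ p) (hp1 : p ≤ 1) {S : Finset α} {f g : Finset α → ℝ}
    (h : ∀ T ⊆ S, f T ≤ g T) : bexp p S f ≤ bexp p S g := by
  refine Finset.sum_le_sum fun T hT => ?_
  have : 0 ≤ 1 - p := by linarith
  exact mul_le_mul_of_nonneg_left (h T (Finset.mem_powerset.1 hT)) (by positivity)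

lemma bexp_congr {S : Finset α} {f g : Finset α → ℝ}
    (h : ∀ T ⊆ S, f T = g T) : bexp p S f = bexp p S g :=
  Finset.sum_congr rfl fun T hT => by rw [h T (Finset.mem_powerset.1 hT)]

lemma bexp_add (S : Finset α) (f g : Finset α → ℝ) :
    bexp p S (fun T => f T + g T) = bexp p S f + bexp p S g := by
  simp only [bexp, mul_add, Finset.sum_add_distrib]

lemma bexp_const_mul (S : Finset α) (c : ℝ) (f : Finset α → ℝ) :
    bexp p S (fun T => c * f T) = c * bexp p S f := by
  simp only [bexp, Finset.mul_sum]
  exact Finset.sum_congr rfl fun T _ => by ring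

lemma bexp_sum {ι : Type*} (I : Finset ι) (S : Finset α) (f : ι → Finset α → ℝ) :
    bexp p S (fun T => ∑ i ∈ I, f i T) = ∑ i ∈ I, bexp p S (f i) := by
  simp only [bexp, Finset.mul_sum]
  exact Finset.sum_comm

/-- The probability generating function of the size of the random subset. -/
lemma bexp_pow_card (S : Finset α) (x : ℝ) :
    bexp p S (fun T => x ^ T.card) = (p * x + (1 - p)) ^ S.card := by
  rw [← Finset.sum_pow_mul_eq_add_pow]
  refine Finset.sum_congr rfl fun T _ => ?_
  rw [mul_pow]
  ring

lemma bexp_one (S : Finset α) : bexp p S (fun _ => 1) = 1 := by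
  simpa using bexp_pow_card (p := p) S 1

/-- A fixed set `F` is contained in the random subset with probability `p ^ |F|`. -/
lemma bexp_subset [DecidableEq α] {S F : Finset α} (hF : F ⊆ S) :
    bexp p S (fun T => if F ⊆ T then 1 else 0) = p ^ F.card := by
  conv_lhs => rw [← Finset.union_sdiff_of_subset hF]
  rw [bexp_union Finset.disjoint_sdiff]
  have key : ∀ T ⊆ F, bexp p (S \ F) (fun T₂ => if F ⊆ T ∪ T₂ then (1 : ℝ) else 0) =
      if T = F then 1 else 0 := by
    intro T hT
    rw [← mul_one (if T = F then (1 : ℝ) else 0), ← bexp_one (p := p) (S \ F), ← bexp_const_mul]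
    refine bexp_congr fun T₂ hT₂ => ?_
    have hiff : F ⊆ T ∪ T₂ ↔ T = F := by
      constructor
      · intro h
        refine Finset.Subset.antisymm hT fun e he => ?_
        rcases Finset.mem_union.1 (h he) with h1 | h1
        · exact h1
        · exact absurd he (Finset.mem_sdiff.1 (hT₂ h1)).2
      · rintro rfl
        exact Finset.subset_union_left
    simp only [hiff, mul_one]
  rw [bexp_congr key]
  simp [bexp]

end bexp

/-! ### Breadth-first exploration -/

/-- The set of vertices of `A` joined to a vertex of `X` by an edge in `T`. -/
def bdry {V : Type*} [DecidableEq V] (X A : Finset V) (T : Finset (Sym2 V)) : Finset V :=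
  A.filter fun a => ∃ x ∈ X, s(x, a) ∈ T

/-- The discounted size of the breadth-first exploration: starting from the current layer `X` with
unexplored set `A`, the next layer is `bdry X A T`, and the `j`-th layer reached in this way is
counted with weight `r ^ j`, for `1 ≤ j ≤ L`. -/
def phi {V : Type*} [DecidableEq V] (r : ℝ) :
    ℕ → Finset V → Finset V → Finset (Sym2 V) → ℝ
  | 0, _, _, _ => 0
  | L + 1, X, A, T =>
    r * ((bdry X A T).card + phi r L (bdry X A T) (A \ bdry X A T) T)

section explore

variable {V : Type*} [DecidableEq V] {r p : ℝ}

lemma bdry_congr {X A : Finset V} {T T' : Finset (Sym2 V)}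
    (h : ∀ x ∈ X, ∀ a ∈ A, (s(x, a) ∈ T ↔ s(x, a) ∈ T')) : bdry X A T = bdry X A T' := by
  refine Finset.filter_congr fun a ha => ?_
  constructor
  · rintro ⟨x, hx, h'⟩
    exact ⟨x, hx, (h x hx a ha).1 h'⟩
  · rintro ⟨x, hx, h'⟩
    exact ⟨x, hx, (h x hx a ha).2 h'⟩

lemma bdry_subset (X A : Finset V) (T : Finset (Sym2 V)) : bdry X A T ⊆ A :=
  Finset.filter_subset _ _

/-- The exploration from `X` into `A` only reads edges between `X ∪ A` and `A`. -/
lemma phi_congr (L : ℕ) {X A : Finset V} {T T' : Finset (Sym2 V)}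
    (h : ∀ x ∈ X ∪ A, ∀ a ∈ A, (s(x, a) ∈ T ↔ s(x, a) ∈ T')) :
    phi r L X A T = phi r L X A T' := by
  induction L generalizing X A with
  | zero => rfl
  | succ L ih =>
    have hb : bdry X A T = bdry X A T' :=
      bdry_congr fun x hx a ha => h x (Finset.mem_union_left _ hx) a ha
    simp only [phi, hb]
    rw [ih]
    intro x hx a ha
    refine h x (Finset.mem_union_right _ ?_) a (Finset.mem_sdiff.1 ha).1
    rcases Finset.mem_union.1 hx with hx | hx
    · exact bdry_subset _ _ _ hx
    · exact (Finset.mem_sdiff.1 hx).1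

lemma phi_nonneg (hr : 0 ≤ r) (L : ℕ) (X A : Finset V) (T : Finset (Sym2 V)) :
    0 ≤ phi r L X A T := by
  induction L generalizing X A with
  | zero => exact le_rfl
  | succ L ih =>
    have := ih (bdry X A T) (A \ bdry X A T)
    simp only [phi]
    positivity

/-- If all edges of `T` join `X` to `A`, each boundary vertex uses up an edge of its own. -/
lemma card_bdry_le {X A : Finset V} (hXA : Disjoint X A) {T : Finset (Sym2 V)} :
    (bdry X A T).card ≤ T.card := by
  have hex : ∀ a : V, ∃ x : V, a ∈ bdry X A T → x ∈ X ∧ s(x, a) ∈ T := by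
    intro a
    by_cases ha : a ∈ bdry X A T
    · obtain ⟨x, hx⟩ := (Finset.mem_filter.1 ha).2
      exact ⟨x, fun _ => hx⟩
    · exact ⟨a, fun h => absurd h ha⟩
  choose f hf using hex
  refine Finset.card_le_card_of_injOn (fun a => s(f a, a)) (fun a ha => (hf a ha).2) ?_
  intro a ha b hb hab
  rcases Sym2.eq_iff.1 hab with h | h
  · exact h.2
  · have h1 := (hf a ha).1
    rw [h.1] at h1
    exact absurd (bdry_subset _ _ _ hb) (Finset.disjoint_left.1 hXA h1)

/-- One step of the exploration. Conditionally on the next layer `Y`, the remaining exploration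
uses fresh edges, so its exponential moment is at most `exp (B |Y|)`; the size of `Y` is dominated
by a binomial variable with at most `|X| |V|` trials. -/
lemma mgf_step [Fintype V] (hp0 : 0 ≤ p) (hp1 : p ≤ 1) {d : ℝ} (hpd : Fintype.card V * p ≤ d)
    (hr : 0 ≤ r) {t B : ℝ} (ht : 0 ≤ t) (hB : 0 ≤ B) (L : ℕ)
    (ih : ∀ (X A : Finset V) (S : Finset (Sym2 V)), Disjoint X A →
      bexp p S (fun T => Real.exp (r * t * phi r L X A T)) ≤ Real.exp (B * X.card))
    (X A : Finset V) (S : Finset (Sym2 V)) (hXA : Disjoint X A) :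
    bexp p S (fun T => Real.exp (t * phi r (L + 1) X A T)) ≤
      Real.exp (d * (Real.exp (r * t + B) - 1) * X.card) := by
  set S₁ := S.filter (fun e => ∃ x ∈ X, ∃ a ∈ A, e = s(x, a)) with hS₁
  have hsub : S₁ ⊆ S := Finset.filter_subset _ _
  have hcard : S₁.card ≤ X.card * A.card := by
    rw [← Finset.card_product]
    refine (Finset.card_le_card (t := (X ×ˢ A).image fun q => s(q.1, q.2)) ?_).trans
      Finset.card_image_le
    intro e he
    obtain ⟨x, hx, a, ha, rfl⟩ := (Finset.mem_filter.1 he).2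
    exact Finset.mem_image.2 ⟨(x, a), Finset.mem_product.2 ⟨hx, ha⟩, rfl⟩
  set c := r * t + B with hc
  have hc0 : 0 ≤ c := by positivity
  have hexp1 : 0 ≤ Real.exp c - 1 := by linarith [Real.one_le_exp hc0]
  conv_lhs => rw [← Finset.union_sdiff_of_subset hsub]
  rw [bexp_union Finset.disjoint_sdiff]
  calc _ ≤ bexp p S₁ (fun T₁ => Real.exp c ^ T₁.card) := by
        refine bexp_mono hp0 hp1 fun T₁ hT₁ => ?_
        set Y := bdry X A T₁ with hY
        have hYA : Y ⊆ A := bdry_subset _ _ _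
        have heq : ∀ T₂ ⊆ S \ S₁, Real.exp (t * phi r (L + 1) X A (T₁ ∪ T₂)) =
            Real.exp (r * t * Y.card) * Real.exp (r * t * phi r L Y (A \ Y) T₂) := by
          intro T₂ hT₂
          have h1 : bdry X A (T₁ ∪ T₂) = Y := by
            refine bdry_congr fun x hx a ha => ?_
            simp only [Finset.mem_union, or_iff_left_iff_imp]
            intro h
            have h' := Finset.mem_sdiff.1 (hT₂ h)
            exact absurd (Finset.mem_filter.2 ⟨h'.1, x, hx, a, ha, rfl⟩) h'.2
          have h2 : phi r L Y (A \ Y) (T₁ ∪ T₂) = phi r L Y (A \ Y) T₂ := by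
            refine phi_congr L fun y hy a ha => ?_
            simp only [Finset.mem_union, or_iff_right_iff_imp]
            intro h
            -- an edge of `T₁` has an endpoint in `X`, which is disjoint from `A`
            obtain ⟨x, hx, b, hb, hxb⟩ := (Finset.mem_filter.1 (hT₁ h)).2
            have hyA : y ∈ A := by
              rcases Finset.mem_union.1 hy with hy | hy
              · exact hYA hy
              · exact (Finset.mem_sdiff.1 hy).1
            have haA : a ∈ A := (Finset.mem_sdiff.1 ha).1
            have hxA := Finset.disjoint_left.1 hXA hx
            rcases Sym2.eq_iff.1 hxb with h | h
            · exact absurd (h.1 ▸ hyA) hxA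
            · exact absurd (h.2 ▸ haA) hxA
          simp only [phi, h1, h2]
          rw [← Real.exp_add]
          ring_nf
        rw [bexp_congr heq, bexp_const_mul]
        have h3 := ih Y (A \ Y) (S \ S₁) Finset.disjoint_sdiff
        have hYc : (Y.card : ℝ) ≤ T₁.card := by exact_mod_cast card_bdry_le hXA
        calc _ ≤ Real.exp (r * t * Y.card) * Real.exp (B * Y.card) := by gcongr
          _ = Real.exp (c * Y.card) := by rw [← Real.exp_add, hc]; ring_nf
          _ ≤ Real.exp (c * T₁.card) := by gcongr
          _ = _ := by rw [← Real.exp_nat_mul, mul_comm]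
    _ = (p * Real.exp c + (1 - p)) ^ S₁.card := bexp_pow_card _ _
    _ ≤ Real.exp (p * (Real.exp c - 1)) ^ S₁.card := by
        have h0 : 0 ≤ p * Real.exp c + (1 - p) := by nlinarith [Real.exp_pos c]
        refine pow_le_pow_left₀ h0 ?_ _
        linarith [Real.add_one_le_exp (p * (Real.exp c - 1))]
    _ = Real.exp (S₁.card * (p * (Real.exp c - 1))) := by rw [← Real.exp_nat_mul]
    _ ≤ _ := by
        refine Real.exp_le_exp.2 ?_
        have h4 : (S₁.card : ℝ) ≤ X.card * Fintype.card V := by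
          exact_mod_cast hcard.trans (Nat.mul_le_mul_left _ (Finset.card_le_univ A))
        calc (S₁.card : ℝ) * (p * (Real.exp c - 1))
            ≤ (X.card * Fintype.card V) * (p * (Real.exp c - 1)) := by gcongr
          _ = (Fintype.card V * p) * ((Real.exp c - 1) * X.card) := by ring
          _ ≤ d * ((Real.exp c - 1) * X.card) := by gcongr
          _ = _ := by ring

end explore

/-- The exponential moments of the exploration are bounded uniformly in the number of vertices, the
depth and the pool of edges, as for a subcritically discounted Galton–Watson tree. For small `t` a
bound linear in `t` reproduces itself under `mgf_step`; each further application of `mgf_step`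
enlarges the admissible range of `t` by the factor `r⁻¹ > 1`. -/
lemma mgf_bound {d r : ℝ} (hd : 1 ≤ d) (hr : 0 < r) (hdr : d * r < 1) {t : ℝ} (ht : 0 ≤ t) :
    ∃ B : ℝ, 0 ≤ B ∧ ∀ (n : ℕ) (p : ℝ), 0 ≤ p → p ≤ 1 → n * p ≤ d →
      ∀ (L : ℕ) (X A : Finset (Fin n)) (S : Finset (Sym2 (Fin n))), Disjoint X A →
        bexp p S (fun T => Real.exp (t * phi r L X A T)) ≤ Real.exp (B * X.card) := by
  have hr1 : r < 1 := by nlinarith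
  obtain ⟨t₀, ht₀, hsmall⟩ : ∃ t₀ : ℝ, 0 < t₀ ∧ ∀ t, 0 ≤ t → t ≤ t₀ →
      ∃ B : ℝ, 0 ≤ B ∧ ∀ (n : ℕ) (p : ℝ), 0 ≤ p → p ≤ 1 → n * p ≤ d →
      ∀ (L : ℕ) (X A : Finset (Fin n)) (S : Finset (Sym2 (Fin n))), Disjoint X A →
        bexp p S (fun T => Real.exp (t * phi r L X A T)) ≤ Real.exp (B * X.card) := by
    -- `C` solves `σ (1 + C) = C` with `σ = (1 + d r) / 2`, the slack between `d r` and `σ`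
    -- absorbing the second-order term of the exponential
    set ρ := d * r with hρ
    have hρ0 : 0 < ρ := by positivity
    set σ := (1 + ρ) / 2 with hσ
    set C := σ / (1 - σ) with hC
    have hσ1 : 0 < 1 - σ := by rw [hσ]; linarith
    have hC0 : 0 < C := by rw [hC]; positivity
    have hCσ : σ * (1 + C) = C := by rw [hC]; field_simp; ring
    set η := (1 - ρ) / (2 * ρ) with hη
    have hη0 : 0 < η := by rw [hη]; apply div_pos <;> linarith
    have hρη : ρ * (1 + η) = σ := by rw [hη, hσ]; field_simp; ring
    refine ⟨min η 1 / (r * (1 + C)), by positivity, fun t ht htt => ?_⟩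
    have hx : r * t * (1 + C) ≤ min η 1 := by
      rw [le_div_iff₀ (by positivity)] at htt
      linarith
    have hx0 : 0 ≤ r * t * (1 + C) := by positivity
    have hstep : ∀ s, 0 ≤ s → s ≤ t → d * (Real.exp (r * s + C * (r * s)) - 1) ≤ C * s := by
      intro s hs hst
      set x := r * s * (1 + C) with hxdef
      have hx0 : 0 ≤ x := by positivity
      have hxle : x ≤ min η 1 := le_trans (by rw [hxdef]; gcongr) hx
      have hxη := hxle.trans (min_le_left _ _)
      have hx1 := hxle.trans (min_le_right _ _)
      have he : Real.exp x - 1 ≤ x * (1 + x) := by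
        have := Real.abs_exp_sub_one_sub_id_le (x := x) (by rwa [abs_of_nonneg hx0])
        have := (abs_le.1 this).2
        nlinarith
      have h1 : r * s + C * (r * s) = x := by rw [hxdef]; ring
      rw [h1]
      calc d * (Real.exp x - 1) ≤ d * (x * (1 + η)) := by
            have : x * (1 + x) ≤ x * (1 + η) := by gcongr
            gcongr
            linarith
        _ = (ρ * (1 + η)) * (1 + C) * s := by rw [hxdef, hρ]; ring
        _ = C * s := by rw [hρη, hCσ]
    refine ⟨C * t, by positivity, fun n p hp0 hp1 hnp L => ?_⟩
    have main : ∀ s, 0 ≤ s → s ≤ t →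
        ∀ (X A : Finset (Fin n)) (S : Finset (Sym2 (Fin n))), Disjoint X A →
        bexp p S (fun T => Real.exp (s * phi r L X A T)) ≤ Real.exp (C * s * X.card) := by
      induction L with
      | zero =>
        intro s hs _ X A S _
        simp only [phi, mul_zero, Real.exp_zero]
        rw [bexp_one]
        exact Real.one_le_exp (by positivity)
      | succ L ih =>
        intro s hs hst X A S hXA
        have hrs : r * s ≤ t := by nlinarith
        refine (mgf_step hp0 hp1 (by simpa using hnp) hr.le hs (B := C * (r * s)) (by positivity) L
          (ih (r * s) (by positivity) hrs) X A S hXA).trans ?_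
        have := hstep s hs hst
        gcongr
    exact main t ht le_rfl
  have hind : ∀ k : ℕ, ∀ t, 0 ≤ t → r ^ k * t ≤ t₀ →
      ∃ B : ℝ, 0 ≤ B ∧ ∀ (n : ℕ) (p : ℝ), 0 ≤ p → p ≤ 1 → n * p ≤ d →
      ∀ (L : ℕ) (X A : Finset (Fin n)) (S : Finset (Sym2 (Fin n))), Disjoint X A →
        bexp p S (fun T => Real.exp (t * phi r L X A T)) ≤ Real.exp (B * X.card) := by
    intro k
    induction k with
    | zero =>
      intro t ht h
      exact hsmall t ht (by simpa using h)
    | succ k ih =>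
      intro t ht h
      obtain ⟨B, hB0, hB⟩ := ih (r * t) (by positivity) (by rw [← mul_assoc, ← pow_succ]; exact h)
      have hB' : 0 ≤ d * (Real.exp (r * t + B) - 1) := by
        have := Real.one_le_exp (x := r * t + B) (by positivity)
        exact mul_nonneg (by linarith) (by linarith)
      refine ⟨d * (Real.exp (r * t + B) - 1), hB', fun n p hp0 hp1 hnp L X A S hXA => ?_⟩
      cases L with
      | zero =>
        simp only [phi, mul_zero, Real.exp_zero]
        rw [bexp_one]
        exact Real.one_le_exp (by positivity)
      | succ L =>
        exact mgf_step hp0 hp1 (by simpa using hnp) hr.le ht hB0 L (hB n p hp0 hp1 hnp L) X A S hXA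
  obtain ⟨k, hk⟩ := exists_pow_lt_of_lt_one (show 0 < t₀ / (t + 1) by positivity) hr1
  refine hind k t ht ?_
  rw [lt_div_iff₀ (by positivity)] at hk
  have : 0 ≤ r ^ k := by positivity
  linarith

/-! ### Simple paths in nearly acyclic graphs -/

/-- A simple path either avoids the edge `s(a, b)`, or crosses it exactly once, in one of the two
directions, and then splits into two simple paths avoiding this edge. -/
lemma path_cases {W : Type*} {H : SimpleGraph W} (a b : W) {u v : W} (p : H.Walk u v)
    (hp : p.IsPath) :
    (∃ q : (H.deleteEdges {s(a, b)}).Walk u v, q.IsPath ∧ p.support = q.support) ∨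
    (∃ (q₁ : (H.deleteEdges {s(a, b)}).Walk u a) (q₂ : (H.deleteEdges {s(a, b)}).Walk b v),
      q₁.IsPath ∧ q₂.IsPath ∧ p.support = q₁.support ++ q₂.support) ∨
    (∃ (q₁ : (H.deleteEdges {s(a, b)}).Walk u b) (q₂ : (H.deleteEdges {s(a, b)}).Walk a v),
      q₁.IsPath ∧ q₂.IsPath ∧ p.support = q₁.support ++ q₂.support) := by
  induction p with
  | nil => exact Or.inl ⟨.nil, by simp, by simp⟩
  | @cons u w v h p ih =>
    rw [SimpleGraph.Walk.isPath_def, SimpleGraph.Walk.support_cons, List.nodup_cons] at hp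
    obtain ⟨hu, hnd⟩ := hp
    have hadj : s(u, w) ≠ s(a, b) → (H.deleteEdges {s(a, b)}).Adj u w := fun hne => by
      rw [SimpleGraph.deleteEdges_adj]
      exact ⟨h, hne⟩
    rcases ih ((SimpleGraph.Walk.isPath_def _).2 hnd) with
      ⟨q, hq, hs⟩ | ⟨q₁, q₂, hq₁, hq₂, hs⟩ | ⟨q₁, q₂, hq₁, hq₂, hs⟩
    · by_cases he : s(u, w) = s(a, b)
      · right
        rcases Sym2.eq_iff.1 he with ⟨rfl, rfl⟩ | ⟨rfl, rfl⟩
        · exact Or.inl ⟨.nil, q, by simp, hq, by simp [hs]⟩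
        · exact Or.inr ⟨.nil, q, by simp, hq, by simp [hs]⟩
      · left
        refine ⟨.cons (hadj he) q, ?_, by simp [hs]⟩
        rw [SimpleGraph.Walk.isPath_def, SimpleGraph.Walk.support_cons, List.nodup_cons, ← hs]
        exact ⟨hu, hnd⟩
    all_goals
      rw [hs, List.mem_append, not_or] at hu
      -- both endpoints of the crossed edge lie on the tail of the path, so `u` is neither of them
      have hne : s(u, w) ≠ s(a, b) := by
        intro he
        rcases Sym2.eq_iff.1 he with ⟨rfl, _⟩ | ⟨rfl, _⟩
        · first
            | exact hu.1 (SimpleGraph.Walk.end_mem_support _)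
            | exact hu.2 (SimpleGraph.Walk.start_mem_support _)
        · first
            | exact hu.1 (SimpleGraph.Walk.end_mem_support _)
            | exact hu.2 (SimpleGraph.Walk.start_mem_support _)
    · refine Or.inr (Or.inl ⟨.cons (hadj hne) q₁, q₂, ?_, hq₂, by simp [hs]⟩)
      rw [SimpleGraph.Walk.cons_isPath_iff]
      exact ⟨hq₁, hu.1⟩
    · refine Or.inr (Or.inr ⟨.cons (hadj hne) q₁, q₂, ?_, hq₂, by simp [hs]⟩)
      rw [SimpleGraph.Walk.cons_isPath_iff]
      exact ⟨hq₁, hu.1⟩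

lemma acyclic_exists_support {W : Type*} {H : SimpleGraph W} (hH : H.IsAcyclic) (u v : W) :
    ∃ l : List W, ∀ q : H.Walk u v, q.IsPath → q.support = l := by
  by_cases h : ∃ q : H.Walk u v, q.IsPath
  · obtain ⟨q, hq⟩ := h
    refine ⟨q.support, fun q' hq' => ?_⟩
    have := (hH.subsingleton_path _ _).elim ⟨q', hq'⟩ ⟨q, hq⟩
    rw [Subtype.mk.injEq] at this
    rw [this]
  · exact ⟨[], fun q hq => absurd ⟨q, hq⟩ h⟩

/-- A connected graph with at most as many edges as vertices has at most three simple paths between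
two given vertices: it is a tree, or becomes one after deleting a non-bridge edge. -/
lemma card_paths_le_three {W : Type*} [Finite W] {H : SimpleGraph W} (hconn : H.Connected)
    (hcard : Nat.card H.edgeSet ≤ Nat.card W) {u v : W} (F : Finset (H.Walk u v))
    (hF : ∀ p ∈ F, p.IsPath) : F.card ≤ 3 := by
  have hlist : ∃ l₁ l₂ l₃ : List W, ∀ p ∈ F, p.support = l₁ ∨ p.support = l₂ ∨ p.support = l₃ := by
    by_cases hac : H.IsAcyclic
    · obtain ⟨l, hl⟩ := acyclic_exists_support hac u v
      exact ⟨l, l, l, fun p hp => Or.inl (hl p (hF p hp))⟩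
    · rw [SimpleGraph.isAcyclic_iff_forall_isBridge] at hac
      push Not at hac
      obtain ⟨e, he, hbr⟩ := hac
      induction e with
      | _ a b =>
      have hconn' := hconn.connected_delete_edge_of_not_isBridge hbr
      have hac' : (H.deleteEdges {s(a, b)}).IsAcyclic := by
        refine (SimpleGraph.isTree_iff_connected_and_card.2 ⟨hconn', ?_⟩).isAcyclic
        have h1 := hconn'.card_vert_le_card_edgeSet_add_one
        have h2 : Nat.card (H.deleteEdges {s(a, b)}).edgeSet + 1 = Nat.card H.edgeSet := by
          rw [SimpleGraph.edgeSet_deleteEdges, Nat.card_coe_set_eq, Nat.card_coe_set_eq]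
          exact Set.ncard_sdiff_singleton_add_one he
        lia
      obtain ⟨l, hl⟩ := acyclic_exists_support hac' u v
      obtain ⟨l₁, hl₁⟩ := acyclic_exists_support hac' u a
      obtain ⟨l₂, hl₂⟩ := acyclic_exists_support hac' b v
      obtain ⟨l₃, hl₃⟩ := acyclic_exists_support hac' u b
      obtain ⟨l₄, hl₄⟩ := acyclic_exists_support hac' a v
      refine ⟨l, l₁ ++ l₂, l₃ ++ l₄, fun p hp => ?_⟩
      rcases path_cases a b p (hF p hp) with ⟨q, hq, hs⟩ | ⟨q₁, q₂, hq₁, hq₂, hs⟩ |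
        ⟨q₁, q₂, hq₁, hq₂, hs⟩
      · exact Or.inl (by rw [hs, hl q hq])
      · exact Or.inr (Or.inl (by rw [hs, hl₁ q₁ hq₁, hl₂ q₂ hq₂]))
      · exact Or.inr (Or.inr (by rw [hs, hl₃ q₁ hq₁, hl₄ q₂ hq₂]))
  obtain ⟨l₁, l₂, l₃, hl⟩ := hlist
  calc F.card = (F.image SimpleGraph.Walk.support).card :=
        (Finset.card_image_of_injective _ fun p q h => SimpleGraph.Walk.ext_support h).symm
    _ ≤ ({l₁, l₂, l₃} : Finset (List W)).card := by
        refine Finset.card_le_card fun l h => ?_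
        obtain ⟨p, hp, rfl⟩ := Finset.mem_image.1 h
        simpa using hl p hp
    _ ≤ 3 := Finset.card_le_three

/-- The graph `G` has no set of at most `m` vertices spanning more edges than it has vertices. -/
def LocallySparse {V : Type*} [DecidableEq V] (G : SimpleGraph V) (m : ℕ) : Prop :=
  ∀ U : Finset V, U.card ≤ m → ∀ F : Finset (Sym2 V), F ⊆ U.sym2 → (F : Set (Sym2 V)) ⊆ G.edgeSet →
    F.card ≤ U.card

/-- Four short simple paths between the same two vertices would span a small connected subgraph
with more edges than vertices. -/
lemma card_short_paths_le {V : Type*} [Fintype V] [DecidableEq V] {G : SimpleGraph V} {L : ℕ}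
    (hG : LocallySparse G (4 * (L + 1))) {v u : V} (F : Finset (G.Walk v u))
    (hF : ∀ p ∈ F, p.IsPath ∧ p.length ≤ L) : F.card ≤ 3 := by
  by_contra! hcon
  obtain ⟨F', hF'F, hF'card⟩ := Finset.exists_subset_card_eq (show 4 ≤ F.card from hcon)
  set U : Finset V := F'.biUnion (fun p => p.support.toFinset) with hU
  have hUcard : U.card ≤ 4 * (L + 1) := by
    rw [← hF'card]
    refine Finset.card_biUnion_le_card_mul _ _ _ fun p hp => ?_
    refine (List.toFinset_card_le _).trans ?_
    rw [SimpleGraph.Walk.length_support]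
    have := (hF p (hF'F hp)).2
    lia
  have hmem : ∀ p ∈ F', ∀ x ∈ p.support, x ∈ (U : Set V) := fun p hp x hx =>
    Finset.mem_coe.2 (Finset.mem_biUnion.2 ⟨p, hp, by simpa using hx⟩)
  obtain ⟨p₀, hp₀⟩ : F'.Nonempty := Finset.card_pos.1 (by lia)
  have hv : v ∈ (U : Set V) := hmem p₀ hp₀ v p₀.start_mem_support
  have hu : u ∈ (U : Set V) := hmem p₀ hp₀ u p₀.end_mem_support
  have hconn : (G.induce (U : Set V)).Connected := by
    rw [SimpleGraph.connected_iff_exists_forall_reachable]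
    refine ⟨⟨v, hv⟩, fun ⟨x, hx⟩ => ?_⟩
    obtain ⟨p, hp, hxp⟩ := Finset.mem_biUnion.1 (Finset.mem_coe.1 hx)
    have hxp' : x ∈ p.support := by simpa using hxp
    exact ⟨(p.takeUntil x hxp').induce (U : Set V)
      fun y hy => hmem p hp y (p.support_takeUntil_subset_support hxp' hy)⟩
  have hcard : Nat.card (G.induce (U : Set V)).edgeSet ≤ Nat.card (U : Set V) := by
    set E : Finset (Sym2 (U : Set V)) := (G.induce (U : Set V)).edgeSet.toFinset with hE
    have h1 : Nat.card (G.induce (U : Set V)).edgeSet = E.card := by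
      rw [Nat.card_coe_set_eq, Set.ncard_eq_toFinset_card']
    have hinj : Function.Injective (Sym2.map (fun x : (U : Set V) => x.1)) :=
      Sym2.map.injective fun _ _ h => Subtype.ext h
    have h2 := hG U hUcard (E.image (Sym2.map fun x : (U : Set V) => x.1)) ?_ ?_
    · rw [Finset.card_image_of_injective _ hinj] at h2
      rw [h1]
      simpa using h2
    · intro e he
      obtain ⟨e', -, rfl⟩ := Finset.mem_image.1 he
      induction e' with
      | _ x y =>
        rw [Sym2.map_mk, Finset.mk_mem_sym2_iff]
        exact ⟨x.2, y.2⟩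
    · intro e he
      obtain ⟨e', he', rfl⟩ := Finset.mem_image.1 (Finset.mem_coe.1 he)
      induction e' with
      | _ x y =>
        rw [hE, Set.mem_toFinset] at he'
        exact he'
  have hfour := card_paths_le_three hconn hcard (u := ⟨v, hv⟩) (v := ⟨u, hu⟩)
    (F'.attach.image fun p => p.1.induce (U : Set V) (hmem p.1 p.2)) ?_
  · rw [Finset.card_image_of_injective, Finset.card_attach] at hfour
    · lia
    · intro p q hpq
      have := congrArg (SimpleGraph.Walk.map (SimpleGraph.Embedding.induce (U : Set V)).toHom) hpq
      simp only [SimpleGraph.Walk.map_induce] at this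
      exact Subtype.ext this
  · intro q hq
    obtain ⟨p, -, rfl⟩ := Finset.mem_image.1 hq
    have hpath := (hF p.1 (hF'F p.2)).1
    rw [← SimpleGraph.Walk.map_induce p.1 (hmem p.1 p.2)] at hpath
    exact hpath.of_map

/-! ### Counting paths through distance layers -/

/-- The vertices at distance exactly `i` from `v`. -/
noncomputable def layer {V : Type*} [Fintype V] (G : SimpleGraph V) (v : V) (i : ℕ) : Finset V :=
  Finset.univ.filter fun u => G.edist v u = i

/-- The vertices at distance more than `i` from `v`, unreachable ones included. -/
noncomputable def beyond {V : Type*} [Fintype V] (G : SimpleGraph V) (v : V) (i : ℕ) : Finset V :=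
  Finset.univ.filter fun u => (i : ℕ∞) < G.edist v u

lemma bdry_layer {V : Type*} [Fintype V] [DecidableEq V] {G : SimpleGraph V} {T : Finset (Sym2 V)}
    (hT : ∀ a b, a ≠ b → (s(a, b) ∈ T ↔ G.Adj a b)) (v : V) (i : ℕ) :
    bdry (layer G v i) (beyond G v i) T = layer G v (i + 1) := by
  ext u
  simp only [bdry, layer, beyond, Finset.mem_filter, Finset.mem_univ, true_and]
  constructor
  · rintro ⟨hlt, x, hx, hxu⟩
    have hne : x ≠ u := by rintro rfl; simp [hx] at hlt
    have hadj := (hT x u hne).1 hxu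
    have htri := G.edist_triangle (u := v) (v := x) (w := u)
    rw [hx, SimpleGraph.edist_eq_one_iff_adj.2 hadj] at htri
    refine le_antisymm (by exact_mod_cast htri) ?_
    push_cast
    exact Order.add_one_le_of_lt hlt
  · intro hu
    obtain ⟨w, hw⟩ := SimpleGraph.exists_walk_of_edist_eq_coe hu
    refine ⟨by rw [hu]; exact_mod_cast Nat.lt_succ_self i, w.penultimate, ?_, ?_⟩
    · have hadj : G.Adj w.penultimate u := w.adj_penultimate (by
        rw [← SimpleGraph.Walk.length_eq_zero_iff]; lia)
      have h1 := SimpleGraph.edist_le w.dropLast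
      have hlen : w.dropLast.length = i := by simp [hw]
      rw [hlen] at h1
      have htri := G.edist_triangle (u := v) (v := w.penultimate) (w := u)
      rw [hu, SimpleGraph.edist_eq_one_iff_adj.2 hadj] at htri
      refine le_antisymm h1 ?_
      push_cast at htri
      exact (ENat.add_le_add_iff_right (by simp)).1 htri
    · have hadj : G.Adj w.penultimate u := w.adj_penultimate (by
        rw [← SimpleGraph.Walk.length_eq_zero_iff]; lia)
      exact (hT _ _ hadj.ne).2 hadj

/-- The exploration started from a distance layer visits the subsequent distance layers. -/
lemma phi_layer {V : Type*} [Fintype V] [DecidableEq V] {G : SimpleGraph V} {T : Finset (Sym2 V)}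
    (hT : ∀ a b, a ≠ b → (s(a, b) ∈ T ↔ G.Adj a b)) (r : ℝ) (v : V) (L i : ℕ) :
    phi r L (layer G v i) (beyond G v i) T =
      ∑ j ∈ Finset.range L, r ^ (j + 1) * (layer G v (i + j + 1)).card := by
  induction L generalizing i with
  | zero => simp [phi]
  | succ L ih =>
    have hdiff : beyond G v i \ layer G v (i + 1) = beyond G v (i + 1) := by
      ext u
      simp only [layer, beyond, Finset.mem_filter, Finset.mem_univ, true_and, Finset.mem_sdiff]
      push_cast
      rw [← Order.add_one_le_iff_of_not_isMax (by simp [isMax_iff_eq_top]), lt_iff_le_and_ne]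
      exact and_congr_right fun _ => ne_comm
    simp only [phi]
    rw [bdry_layer hT, hdiff, ih, Finset.sum_range_succ', mul_add, Finset.mul_sum, add_comm]
    congr 1
    · refine Finset.sum_congr rfl fun j _ => ?_
      rw [show i + 1 + j + 1 = i + (j + 1) + 1 by ring, pow_succ r (j + 1)]
      ring
    · simp

lemma one_add_phi {V : Type*} [Fintype V] [DecidableEq V] {G : SimpleGraph V} {T : Finset (Sym2 V)}
    (hT : ∀ a b, a ≠ b → (s(a, b) ∈ T ↔ G.Adj a b)) (r : ℝ) (v : V) (L : ℕ) :
    1 + phi r L {v} {v}ᶜ T = ∑ j ∈ Finset.range (L + 1), r ^ j * (layer G v j).card := by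
  have h0 : layer G v 0 = {v} := by
    ext u; simp [layer, SimpleGraph.edist_eq_zero_iff, eq_comm (a := v)]
  have h1 : beyond G v 0 = {v}ᶜ := by
    ext u
    simp [beyond, pos_iff_ne_zero, SimpleGraph.edist_eq_zero_iff, eq_comm (a := v)]
  rw [← h0, ← show beyond G v 0 = (layer G v 0)ᶜ by rw [h0, h1], phi_layer hT,
    Finset.sum_range_succ', add_comm]
  simp [h0]

/-- The simple paths from `v` with `ℓ` edges, grouped by their endpoint. -/
lemma numPaths_eq {V : Type*} [Fintype V] [DecidableEq V] (G : SimpleGraph V) (v : V) (ℓ : ℕ) :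
    numPaths G v ℓ = ∑ u : V, (Finset.univ.filter fun q : G.Path v u => q.1.length = ℓ).card := by
  let e : {p : (u : V) × G.Walk v u // p.2.IsPath ∧ p.2.length = ℓ} ≃
      (u : V) × {q : G.Path v u // q.1.length = ℓ} :=
    { toFun := fun p => ⟨p.1.1, ⟨⟨p.1.2, p.2.1⟩, p.2.2⟩⟩
      invFun := fun q => ⟨⟨q.1, q.2.1.1⟩, q.2.1.2, q.2.2⟩
      left_inv := fun _ => rfl
      right_inv := fun _ => rfl }
  rw [numPaths, Nat.card_congr e, Nat.card_sigma]
  refine Finset.sum_congr rfl fun u _ => ?_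
  rw [Nat.card_eq_fintype_card, Fintype.card_subtype]

/-- In a locally sparse graph the discounted count of short paths from `v` is at most three times
the discounted count of vertices near `v`: each vertex is the endpoint of at most three short
paths, none of them shorter than its distance from `v`. -/
lemma sum_numPaths_le {V : Type*} [Fintype V] [DecidableEq V] {G : SimpleGraph V} {L : ℕ}
    (hG : LocallySparse G (4 * (L + 1))) {T : Finset (Sym2 V)}
    (hT : ∀ a b, a ≠ b → (s(a, b) ∈ T ↔ G.Adj a b)) {r : ℝ} (hr0 : 0 ≤ r) (hr1 : r ≤ 1) (v : V) :
    ∑ ℓ ∈ Finset.range (L + 1), r ^ ℓ * numPaths G v ℓ ≤ 3 * (1 + phi r L {v} {v}ᶜ T) := by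
  rw [one_add_phi hT]
  simp only [numPaths_eq, layer, Finset.card_filter, Nat.cast_sum, Finset.mul_sum]
  rw [Finset.sum_comm, Finset.sum_comm (t := Finset.univ)]
  refine Finset.sum_le_sum fun u _ => ?_
  simp only [← Finset.mul_sum]
  set Q : Finset (G.Path v u) := Finset.univ.filter fun q => q.1.length ≤ L with hQ
  have hQ3 : Q.card ≤ 3 := by
    rw [← Finset.card_image_of_injective Q (f := fun q : G.Path v u => q.1)
      Subtype.val_injective]
    refine card_short_paths_le hG _ fun p hp => ?_
    obtain ⟨q, hq, rfl⟩ := Finset.mem_image.1 hp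
    exact ⟨q.2, (Finset.mem_filter.1 hq).2⟩
  have hlhs : ∑ ℓ ∈ Finset.range (L + 1),
      ∑ q : G.Path v u, r ^ ℓ * ((if q.1.length = ℓ then 1 else 0 : ℕ) : ℝ) =
      ∑ q ∈ Q, r ^ q.1.length := by
    rw [Finset.sum_comm, hQ, Finset.sum_filter]
    refine Finset.sum_congr rfl fun q _ => ?_
    simp
  simp only [Finset.mul_sum] at hlhs ⊢
  rw [hlhs]
  rcases Q.eq_empty_or_nonempty with hemp | ⟨q₀, hq₀⟩
  · rw [hemp, Finset.sum_empty]
    positivity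
  · have hq₀L := (Finset.mem_filter.1 hq₀).2
    have hreach : G.Reachable v u := ⟨q₀.1⟩
    have hDL : G.dist v u ≤ L := (SimpleGraph.dist_le q₀.1).trans hq₀L
    calc ∑ q ∈ Q, r ^ q.1.length ≤ ∑ _q ∈ Q, r ^ G.dist v u :=
          Finset.sum_le_sum fun q _ => pow_le_pow_of_le_one hr0 hr1 (SimpleGraph.dist_le q.1)
      _ = Q.card * r ^ G.dist v u := by simp
      _ ≤ 3 * r ^ G.dist v u := by gcongr; exact_mod_cast hQ3
      _ = 3 * (r ^ G.dist v u * ((if G.edist v u = (G.dist v u : ℕ) then 1 else 0 : ℕ) : ℝ)) := by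
          rw [if_pos hreach.coe_dist_eq_edist.symm]; simp
      _ ≤ _ := Finset.single_le_sum
          (f := fun i : ℕ => 3 * (r ^ i * ((if G.edist v u = i then 1 else 0 : ℕ) : ℝ)))
          (fun i _ => by positivity) (Finset.mem_range.2 (Nat.lt_succ_of_le hDL))

/-- Cutting a simple path after `k` steps gives two simple paths that determine it. -/
lemma numPaths_add_le {V : Type*} [Fintype V] [DecidableEq V] (G : SimpleGraph V) {C m : ℕ}
    (hC : ∀ u, numPaths G u m ≤ C) (v : V) (k : ℕ) :
    numPaths G v (k + m) ≤ numPaths G v k * C := by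
  have hfin : ∀ (u : V) (ℓ : ℕ),
      Finite {p : (w : V) × G.Walk u w // p.2.IsPath ∧ p.2.length = ℓ} := fun u ℓ =>
    Finite.of_injective (β := (w : V) × G.Path u w) (fun p => ⟨p.1.1, p.1.2, p.2.1⟩) (by
      rintro ⟨⟨w, p⟩, hp⟩ ⟨⟨w', p'⟩, hp'⟩ h
      simp only [Sigma.mk.injEq] at h
      obtain ⟨rfl, h⟩ := h
      simp only [heq_eq_eq, Subtype.mk.injEq] at h
      subst h
      rfl)
  let f : {p : (w : V) × G.Walk v w // p.2.IsPath ∧ p.2.length = k + m} →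
      (p : {p : (w : V) × G.Walk v w // p.2.IsPath ∧ p.2.length = k}) ×
        {q : (w : V) × G.Walk p.1.1 w // q.2.IsPath ∧ q.2.length = m} := fun p =>
    ⟨⟨⟨_, p.1.2.take k⟩, p.2.1.take k, by simp [p.2.2]⟩,
      ⟨⟨_, p.1.2.drop k⟩, p.2.1.drop k, by simp [p.2.2]⟩⟩
  -- the support of a path is recovered from the supports of its two parts
  let g : ((p : {p : (w : V) × G.Walk v w // p.2.IsPath ∧ p.2.length = k}) ×
      {q : (w : V) × G.Walk p.1.1 w // q.2.IsPath ∧ q.2.length = m}) → List V := fun x =>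
    x.1.1.2.support ++ x.2.1.2.support.tail
  have hg : ∀ p, g (f p) = p.1.2.support := by
    rintro ⟨⟨w, p⟩, hp⟩
    simp only [f, g]
    rw [SimpleGraph.Walk.support_take, SimpleGraph.Walk.drop_support_eq_support_drop_min,
      List.tail_drop, hp.2, Nat.min_eq_left (Nat.le_add_right k m), List.take_append_drop]
  have hf : Function.Injective f := by
    intro p q h
    have h' : p.1.2.support = q.1.2.support := by rw [← hg, ← hg, h]
    obtain ⟨⟨w, p⟩, hp⟩ := p
    obtain ⟨⟨w', q⟩, hq⟩ := q
    have hw : w = w' := by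
      have h1 := p.getLast_support
      have h2 := q.getLast_support
      simp only at h'
      rw [← h1, ← h2]
      congr 1
    subst hw
    have := SimpleGraph.Walk.ext_support h'
    subst this
    rfl
  have := fun u ℓ => hfin u ℓ
  have hle := Nat.card_le_card_of_injective f hf
  refine hle.trans ?_
  have := Fintype.ofFinite {p : (w : V) × G.Walk v w // p.2.IsPath ∧ p.2.length = k}
  rw [Nat.card_sigma]
  refine (Finset.sum_le_card_nsmul _ _ C fun p _ => hC p.1.1).trans ?_
  rw [numPaths, Nat.card_eq_fintype_card]
  simp

/-- If from every vertex the number of simple paths of length `L` is at most `d' ^ L / 2`, the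
branching value is at most twice the contribution of paths shorter than `L`. -/
lemma branchingValue_le {V : Type*} [Fintype V] [DecidableEq V] (G : SimpleGraph V) {d' B : ℝ}
    (hd' : 0 < d') {L : ℕ}
    (hL : ∀ u, (numPaths G u L : ℝ) ≤ d' ^ L / 2) (v : V)
    (hB : ∑ ℓ ∈ Finset.range L, (numPaths G v ℓ : ℝ) / d' ^ ℓ ≤ B) :
    branchingValue G d' v ≤ 2 * B := by
  have hstep : ∀ k, (numPaths G v (k + L) : ℝ) / d' ^ (k + L) ≤
      (numPaths G v k / d' ^ k) / 2 := by
    intro k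
    have h1 := numPaths_add_le G (C := ⌊d' ^ L / 2⌋₊) (m := L)
      (fun u => Nat.le_floor (hL u)) v k
    have h2 : (numPaths G v (k + L) : ℝ) ≤ numPaths G v k * (d' ^ L / 2) := by
      calc (numPaths G v (k + L) : ℝ) ≤ (numPaths G v k * ⌊d' ^ L / 2⌋₊ : ℕ) := by exact_mod_cast h1
        _ = numPaths G v k * (⌊d' ^ L / 2⌋₊ : ℝ) := by push_cast; rfl
        _ ≤ _ := by gcongr; exact Nat.floor_le (by positivity)
    calc (numPaths G v (k + L) : ℝ) / d' ^ (k + L)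
        ≤ numPaths G v k * (d' ^ L / 2) / d' ^ (k + L) := by gcongr
      _ = _ := by rw [pow_add]; field_simp
  refine Real.tsum_le_of_sum_range_le (fun ℓ => by positivity) fun M => ?_
  set x : ℕ → ℝ := fun ℓ => (numPaths G v ℓ : ℝ) / d' ^ ℓ with hx
  have hx0 : ∀ ℓ, 0 ≤ x ℓ := fun ℓ => by rw [hx]; positivity
  have hmono : ∑ ℓ ∈ Finset.range M, x ℓ ≤ ∑ ℓ ∈ Finset.range (L + M), x ℓ :=
    Finset.sum_le_sum_of_subset_of_nonneg (Finset.range_mono (by lia)) fun ℓ _ _ => hx0 ℓ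
  have htail : ∑ ℓ ∈ Finset.range M, x (L + ℓ) ≤ ∑ ℓ ∈ Finset.range M, x ℓ / 2 :=
    Finset.sum_le_sum fun ℓ _ => by rw [add_comm]; exact hstep ℓ
  rw [← Finset.sum_div] at htail
  rw [Finset.sum_range_add] at hmono
  linarith

/-! ### Probability estimates -/

/-- The random graph as a random set of edges of the complete graph. -/
lemma erProb_eq (n : ℕ) (p : ℝ) (P : SimpleGraph (Fin n) → Prop) :
    erProb n p P = bexp p (⊤ : SimpleGraph (Fin n)).edgeFinset
      (fun T => if P (SimpleGraph.fromEdgeSet (T : Set (Sym2 (Fin n)))) then 1 else 0) := by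
  unfold erProb bexp
  have hdiag : ∀ T ∈ (⊤ : SimpleGraph (Fin n)).edgeFinset.powerset,
      (SimpleGraph.fromEdgeSet (T : Set (Sym2 (Fin n)))).edgeSet = T := by
    intro T hT
    rw [SimpleGraph.edgeSet_fromEdgeSet]
    refine Set.ext fun e => ⟨fun h => h.1, fun h => ⟨h, ?_⟩⟩
    have := Finset.mem_powerset.1 hT h
    rw [SimpleGraph.mem_edgeFinset] at this
    exact SimpleGraph.not_isDiag_of_mem_edgeSet _ this
  refine Finset.sum_nbij' (fun G => G.edgeSet.toFinset)
    (fun T => SimpleGraph.fromEdgeSet (T : Set (Sym2 (Fin n)))) ?_ ?_ ?_ ?_ ?_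
  · intro G _
    rw [Finset.mem_powerset]
    intro e he
    rw [Set.mem_toFinset] at he
    rw [SimpleGraph.mem_edgeFinset]
    exact SimpleGraph.edgeSet_mono le_top he
  · intro T _
    exact Finset.mem_univ _
  · intro G _
    simp
  · intro T hT
    refine Finset.coe_injective ?_
    rw [Set.coe_toFinset, hdiag T hT]
  · intro G _
    have hc : edgeCount G = G.edgeSet.toFinset.card := by
      rw [edgeCount, Nat.card_coe_set_eq, Set.ncard_eq_toFinset_card']
    have hS : (⊤ : SimpleGraph (Fin n)).edgeFinset.card = n.choose 2 := by
      rw [SimpleGraph.card_edgeFinset_top_eq_card_choose_two, Fintype.card_fin]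
    rw [hS, hc]
    simp

/-- The expected number of pairs consisting of a vertex set `U` of size at most `m` and `|U| + 1`
edges of the random graph inside `U`. -/
lemma dense_sum_le {n m : ℕ} {d : ℝ} (hn : 0 < n) (hd : 1 ≤ d) (S : Finset (Sym2 (Fin n))) :
    ∑ U ∈ Finset.univ.filter (fun U : Finset (Fin n) => U.card ≤ m),
      ∑ F ∈ (U.sym2 ∩ S).powersetCard (U.card + 1),
        bexp (d / n) S (fun T => if F ⊆ T then 1 else 0) ≤
      (m + 1) * (2 ^ ((m + 1) ^ 2) * d ^ (m + 1)) / n := by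
  have hn' : (0 : ℝ) < n := by exact_mod_cast hn
  have hp0 : 0 ≤ d / n := by positivity
  have h1 : ∀ U ∈ Finset.univ.filter (fun U : Finset (Fin n) => U.card ≤ m),
      ∑ F ∈ (U.sym2 ∩ S).powersetCard (U.card + 1),
        bexp (d / n) S (fun T => if F ⊆ T then 1 else 0) ≤
      2 ^ ((m + 1) ^ 2) * (d / n) ^ (U.card + 1) := by
    intro U hU
    have hUm : U.card ≤ m := (Finset.mem_filter.1 hU).2
    have heach : ∀ F ∈ (U.sym2 ∩ S).powersetCard (U.card + 1),
        bexp (d / n) S (fun T => if F ⊆ T then 1 else 0) = (d / n) ^ (U.card + 1) := by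
      intro F hF
      obtain ⟨hFs, hFc⟩ := Finset.mem_powersetCard.1 hF
      rw [bexp_subset (hFs.trans Finset.inter_subset_right), hFc]
    rw [Finset.sum_congr rfl heach, Finset.sum_const, nsmul_eq_mul]
    gcongr
    have hc : ((U.sym2 ∩ S).powersetCard (U.card + 1)).card ≤ 2 ^ ((m + 1) ^ 2) := by
      calc ((U.sym2 ∩ S).powersetCard (U.card + 1)).card
          ≤ (U.sym2.powerset).card := Finset.card_le_card fun F hF =>
            Finset.mem_powerset.2 ((Finset.mem_powersetCard.1 hF).1.trans Finset.inter_subset_left)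
        _ = 2 ^ (U.card + 1).choose 2 := by rw [Finset.card_powerset, Finset.card_sym2]
        _ ≤ 2 ^ ((m + 1) ^ 2) := by
            refine Nat.pow_le_pow_right (by norm_num) ((Nat.choose_le_pow _ _).trans ?_)
            exact Nat.pow_le_pow_left (by lia) 2
    exact_mod_cast hc
  refine (Finset.sum_le_sum h1).trans ?_
  rw [← Finset.mul_sum, ← Finset.sum_fiberwise_of_maps_to (t := Finset.range (m + 1))
    (g := Finset.card) (fun U hU => Finset.mem_range.2
      (Nat.lt_succ_of_le (Finset.mem_filter.1 hU).2))]
  have h2 : ∀ k ∈ Finset.range (m + 1),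
      ∑ U ∈ (Finset.univ.filter (fun U : Finset (Fin n) => U.card ≤ m)).filter
        (fun U => U.card = k), (d / n) ^ (U.card + 1) ≤ d ^ (m + 1) / n := by
    intro k hk
    have hkm : k + 1 ≤ m + 1 := Finset.mem_range.1 hk
    have hcard : ((Finset.univ.filter (fun U : Finset (Fin n) => U.card ≤ m)).filter
        (fun U => U.card = k)).card ≤ n ^ k := by
      calc _ ≤ ((Finset.univ : Finset (Fin n)).powersetCard k).card :=
            Finset.card_le_card fun U hU => Finset.mem_powersetCard.2
              ⟨Finset.subset_univ _, (Finset.mem_filter.1 hU).2⟩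
        _ = n.choose k := by rw [Finset.card_powersetCard, Finset.card_univ, Fintype.card_fin]
        _ ≤ n ^ k := Nat.choose_le_pow _ _
    calc _ = ∑ _U ∈ (Finset.univ.filter (fun U : Finset (Fin n) => U.card ≤ m)).filter
            (fun U => U.card = k), (d / n) ^ (k + 1) :=
          Finset.sum_congr rfl fun U hU => by rw [(Finset.mem_filter.1 hU).2]
      _ ≤ (n : ℝ) ^ k * (d / n) ^ (k + 1) := by
          rw [Finset.sum_const, nsmul_eq_mul]
          gcongr
          exact_mod_cast hcard
      _ = d ^ (k + 1) / n := by rw [div_pow, pow_succ (n : ℝ)]; field_simp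
      _ ≤ d ^ (m + 1) / n := by gcongr
  calc _ ≤ 2 ^ ((m + 1) ^ 2) * ∑ _k ∈ Finset.range (m + 1), d ^ (m + 1) / (n : ℝ) := by
        gcongr with k hk
        exact h2 k hk
    _ = _ := by
        rw [Finset.sum_const, Finset.card_range, nsmul_eq_mul]
        push_cast
        ring

/-- If the random graph is locally sparse and no exploration from a single vertex is large, all
branching values are small. -/
lemma branching_small {V : Type*} [Fintype V] [DecidableEq V] {G : SimpleGraph V} {L : ℕ}
    (hG : LocallySparse G (4 * (L + 1))) {T : Finset (Sym2 V)}
    (hT : ∀ a b, a ≠ b → (s(a, b) ∈ T ↔ G.Adj a b)) {d₁ d' y : ℝ} (hd₁ : 1 ≤ d₁) (hd' : d₁ ≤ d')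
    (hL : y * d₁ ^ L ≤ d' ^ L)
    (hphi : ∀ v, 1 + phi d₁⁻¹ L {v} {v}ᶜ T ≤ y / 6) (v : V) :
    branchingValue G d' v ≤ y := by
  have h0 : 0 < d₁ := by linarith
  have h0' : 0 < d' := by linarith
  have hsum : ∀ u, ∑ ℓ ∈ Finset.range (L + 1), d₁⁻¹ ^ ℓ * numPaths G u ℓ ≤ y / 2 := by
    intro u
    have := sum_numPaths_le hG hT (inv_nonneg.2 h0.le) (inv_le_one_of_one_le₀ hd₁) u
    linarith [hphi u]
  have hy : branchingValue G d' v ≤ 2 * (y / 2) := by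
    refine branchingValue_le G h0' (L := L) (fun u => ?_) v ?_
    · have h1 : d₁⁻¹ ^ L * numPaths G u L ≤ y / 2 :=
        (Finset.single_le_sum (f := fun ℓ => d₁⁻¹ ^ ℓ * (numPaths G u ℓ : ℝ))
          (fun ℓ _ => by positivity) (Finset.mem_range.2 (Nat.lt_succ_self L))).trans (hsum u)
      rw [inv_pow, inv_mul_le_iff₀ (by positivity)] at h1
      linarith
    · refine le_trans ?_ (hsum v)
      rw [Finset.sum_range_succ]
      have h2 : 0 ≤ d₁⁻¹ ^ L * (numPaths G v L : ℝ) := by positivity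
      have h3 : ∑ ℓ ∈ Finset.range L, (numPaths G v ℓ : ℝ) / d' ^ ℓ ≤
          ∑ ℓ ∈ Finset.range L, d₁⁻¹ ^ ℓ * (numPaths G v ℓ : ℝ) := by
        refine Finset.sum_le_sum fun ℓ _ => ?_
        rw [inv_pow, mul_comm, ← div_eq_mul_inv]
        gcongr
      linarith
  linarith

/-- A quantitative form of the theorem: the failure probability is at most a first-moment bound for
dense small subgraphs plus a Chernoff bound for the explorations from the `n` vertices. -/
lemma failure_le {n L : ℕ} {d d₁ d' y t B : ℝ} (hn : 0 < n) (hdn : d ≤ n) (hd : 1 ≤ d)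
    (hd₁ : 1 ≤ d₁) (hd' : d₁ ≤ d') (hL : y * d₁ ^ L ≤ d' ^ L) (ht : 0 ≤ t)
    (hB : ∀ (X A : Finset (Fin n)) (S : Finset (Sym2 (Fin n))), Disjoint X A →
      bexp (d / n) S (fun T => Real.exp (t * phi d₁⁻¹ L X A T)) ≤ Real.exp (B * X.card)) :
    1 - ((4 * (L + 1) : ℕ) + 1) *
        (2 ^ ((4 * (L + 1) + 1) ^ 2) * d ^ (4 * (L + 1) + 1)) / n -
      n * Real.exp (t + B - t * (y / 6)) ≤
      erProb n (d / n) (fun G => ∀ v : Fin n, branchingValue G d' v ≤ y) := by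
  have hn' : (0 : ℝ) < n := by exact_mod_cast hn
  have hp0 : 0 ≤ d / n := by positivity
  have hp1 : d / n ≤ 1 := (div_le_one hn').2 hdn
  rw [erProb_eq]
  set S := (⊤ : SimpleGraph (Fin n)).edgeFinset with hS
  set m := 4 * (L + 1) with hm
  have hchern : ∀ v : Fin n, bexp (d / n) S (fun T => Real.exp (t - t * (y / 6)) *
      Real.exp (t * phi d₁⁻¹ L {v} {v}ᶜ T)) ≤ Real.exp (t + B - t * (y / 6)) := by
    intro v
    rw [bexp_const_mul]
    have := hB {v} {v}ᶜ S disjoint_compl_right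
    calc _ ≤ Real.exp (t - t * (y / 6)) * Real.exp (B * ({v} : Finset (Fin n)).card) := by gcongr
      _ = _ := by rw [← Real.exp_add, Finset.card_singleton]; congr 1; push_cast; ring
  have hchern' := Finset.sum_le_sum fun v (_ : v ∈ (Finset.univ : Finset (Fin n))) => hchern v
  rw [Finset.sum_const, Finset.card_univ, Fintype.card_fin, nsmul_eq_mul, ← bexp_sum] at hchern'
  have hdense := dense_sum_le (m := m) hn hd S
  simp only [← bexp_sum] at hdense
  have hone := bexp_one (p := d / n) S
  have hmain : bexp (d / n) S (fun _ => 1) ≤ bexp (d / n) S (fun T =>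
      (if (∀ v : Fin n, branchingValue (SimpleGraph.fromEdgeSet (T : Set (Sym2 (Fin n)))) d' v ≤ y)
        then 1 else 0) +
      (∑ U ∈ Finset.univ.filter (fun U : Finset (Fin n) => U.card ≤ m),
        ∑ F ∈ (U.sym2 ∩ S).powersetCard (U.card + 1), (if F ⊆ T then (1 : ℝ) else 0) +
      ∑ v : Fin n, Real.exp (t - t * (y / 6)) * Real.exp (t * phi d₁⁻¹ L {v} {v}ᶜ T))) := by
    refine bexp_mono hp0 hp1 fun T hTS => ?_
    set G := SimpleGraph.fromEdgeSet (T : Set (Sym2 (Fin n))) with hG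
    have hT : ∀ a b, a ≠ b → (s(a, b) ∈ T ↔ G.Adj a b) := fun a b hab => by
      simp [hG, hab]
    have hD0 : ∀ U ∈ Finset.univ.filter (fun U : Finset (Fin n) => U.card ≤ m),
        0 ≤ ∑ F ∈ (U.sym2 ∩ S).powersetCard (U.card + 1), (if F ⊆ T then (1 : ℝ) else 0) :=
      fun U _ => Finset.sum_nonneg fun F _ => by positivity
    have hC0 : ∀ v ∈ (Finset.univ : Finset (Fin n)),
        0 ≤ Real.exp (t - t * (y / 6)) * Real.exp (t * phi d₁⁻¹ L {v} {v}ᶜ T) :=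
      fun v _ => by positivity
    have hD0' := Finset.sum_nonneg hD0
    have hC0' := Finset.sum_nonneg hC0
    by_cases hgood : ∀ v : Fin n, branchingValue G d' v ≤ y
    · rw [if_pos hgood]
      linarith
    rw [if_neg hgood]
    by_cases hsp : LocallySparse G m
    · have hex : ∃ v, y / 6 < 1 + phi d₁⁻¹ L {v} {v}ᶜ T := by
        by_contra! hcon
        exact hgood (branching_small hsp hT hd₁ hd' hL hcon)
      obtain ⟨v, hv⟩ := hex
      have h1 : 1 ≤ Real.exp (t - t * (y / 6)) * Real.exp (t * phi d₁⁻¹ L {v} {v}ᶜ T) := by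
        rw [← Real.exp_add]
        refine Real.one_le_exp ?_
        nlinarith
      have h2 := Finset.single_le_sum hC0 (Finset.mem_univ v)
      linarith
    · unfold LocallySparse at hsp
      push Not at hsp
      obtain ⟨U, hU, F, hFU, hFG, hcard⟩ := hsp
      obtain ⟨F', hF'F, hF'card⟩ := Finset.exists_subset_card_eq (show U.card + 1 ≤ F.card from hcard)
      have hF'T : F' ⊆ T := fun e he => by
        have := hFG (hF'F he)
        rw [hG, SimpleGraph.edgeSet_fromEdgeSet] at this
        exact this.1
      have hmem : F' ∈ (U.sym2 ∩ S).powersetCard (U.card + 1) := Finset.mem_powersetCard.2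
        ⟨Finset.subset_inter (hF'F.trans hFU) (hF'T.trans hTS), hF'card⟩
      have h1 := Finset.single_le_sum (f := fun F => if F ⊆ T then (1 : ℝ) else 0)
        (fun F _ => by positivity) hmem
      have h2 := Finset.single_le_sum hD0 (Finset.mem_filter.2 ⟨Finset.mem_univ U, hU⟩)
      simp only [hF'T, if_true] at h1
      linarith
  rw [bexp_add, bexp_add, hone] at hmain
  have hfinal := hmain.trans (add_le_add le_rfl
    (add_le_add (le_of_eq_of_le (by congr!) hdense) hchern'))
  refine le_of_le_of_eq (b := bexp (d / n) S (fun T =>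
    if (∀ v : Fin n, branchingValue (SimpleGraph.fromEdgeSet (T : Set (Sym2 (Fin n)))) d' v ≤ y)
      then 1 else 0)) ?_ (by congr!)
  linarith

lemma erProb_le_one {n : ℕ} {p : ℝ} (hp0 : 0 ≤ p) (hp1 : p ≤ 1) (P : SimpleGraph (Fin n) → Prop) :
    erProb n p P ≤ 1 := by
  rw [erProb_eq]
  refine (bexp_mono hp0 hp1 (g := fun _ => 1) fun T _ => ?_).trans (bexp_one _).le
  split_ifs <;> norm_num

/-! ### Asymptotics -/

/-- The depth of the explorations: of order `(log n) ^ (1/3)`, which is large compared with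
`log log n` and small compared with `(log n) ^ (1/2)`. -/
noncomputable def depth (n : ℕ) : ℕ := ⌊Real.log n ^ (1 / 3 : ℝ)⌋₊

lemma depth_tendsto : Tendsto depth atTop atTop :=
  tendsto_nat_floor_atTop.comp ((tendsto_rpow_atTop (by norm_num)).comp
    (Real.tendsto_log_atTop.comp tendsto_natCast_atTop_atTop))

lemma depth_pow_le (n : ℕ) : (depth n : ℝ) ^ 3 ≤ Real.log n := by
  have h0 : 0 ≤ Real.log n := Real.log_natCast_nonneg n
  calc (depth n : ℝ) ^ 3 ≤ (Real.log n ^ (1 / 3 : ℝ)) ^ 3 := by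
        gcongr
        exact Nat.floor_le (by positivity)
    _ = Real.log n := by rw [← Real.rpow_natCast, ← Real.rpow_mul h0]; norm_num

lemma log_le_depth_pow (n : ℕ) : Real.log n ≤ ((depth n : ℝ) + 1) ^ 3 := by
  have h0 : 0 ≤ Real.log n := Real.log_natCast_nonneg n
  calc Real.log n = (Real.log n ^ (1 / 3 : ℝ)) ^ 3 := by
        rw [← Real.rpow_natCast, ← Real.rpow_mul h0]; norm_num
    _ ≤ _ := by
        gcongr
        exact (Nat.lt_floor_add_one _).le

lemma eventually_pow_le {ε θ : ℝ} (hε : 0 < ε) (hθ : 1 < θ) :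
    ∀ᶠ L : ℕ in atTop, ε * ((L : ℝ) + 1) ^ 3 ≤ θ ^ L := by
  have h := tendsto_pow_const_div_const_pow_of_one_lt 3 hθ
  have h' : ∀ᶠ L : ℕ in atTop, (L : ℝ) ^ 3 / θ ^ L < 1 / (8 * ε) :=
    h.eventually (gt_mem_nhds (by positivity))
  filter_upwards [h', eventually_ge_atTop 1] with L hL hL1
  have hL1' : (1 : ℝ) ≤ L := by exact_mod_cast hL1
  rw [div_lt_div_iff₀ (by positivity) (by positivity)] at hL
  have : ((L : ℝ) + 1) ^ 3 ≤ (2 * L) ^ 3 := by gcongr; linarith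
  nlinarith

lemma tendsto_exp_cubic (κ : ℝ) (hκ : 0 ≤ κ) :
    Tendsto (fun L : ℕ => Real.exp (κ * (4 * (L : ℝ) + 5) ^ 2 - (L : ℝ) ^ 3)) atTop (nhds 0) := by
  refine Real.tendsto_exp_atBot.comp ?_
  refine tendsto_atBot_mono' atTop ?_ (tendsto_neg_atTop_atBot.comp tendsto_natCast_atTop_atTop)
  filter_upwards [eventually_ge_atTop (⌈81 * κ + 1⌉₊)] with L hL
  have hL' : 81 * κ + 1 ≤ L := (Nat.le_ceil _).trans (by exact_mod_cast hL)
  have hL1 : (1 : ℝ) ≤ L := by linarith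
  have h1 : (4 * (L : ℝ) + 5) ^ 2 ≤ (9 * L) ^ 2 := by gcongr; linarith
  have h2 : κ * (4 * (L : ℝ) + 5) ^ 2 ≤ κ * (9 * L) ^ 2 := by gcongr
  have h3 : (81 * κ + 1) * (L : ℝ) ^ 2 ≤ L * (L : ℝ) ^ 2 := by gcongr
  have h4 : (L : ℝ) ≤ (L : ℝ) ^ 2 := by nlinarith
  simp only [Function.comp]
  nlinarith

/-- The expected number of dense small subgraphs tends to zero. -/
lemma dense_bound {n : ℕ} (hn : 0 < n) {d : ℝ} (hd : 1 ≤ d) :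
    ((4 * (depth n + 1) : ℕ) + 1) *
        (2 ^ ((4 * (depth n + 1) + 1) ^ 2) * d ^ (4 * (depth n + 1) + 1)) / (n : ℝ) ≤
      Real.exp ((2 + Real.log d) * (4 * (depth n : ℝ) + 5) ^ 2 - (depth n : ℝ) ^ 3) := by
  set L := depth n with hL
  have hn' : (0 : ℝ) < n := by exact_mod_cast hn
  set q : ℝ := 4 * (L : ℝ) + 5 with hq
  have hqN : ((4 * (L + 1) + 1 : ℕ) : ℝ) = q := by rw [hq]; push_cast; ring
  have hq1 : 1 ≤ q := by rw [hq]; linarith [(Nat.cast_nonneg L : (0 : ℝ) ≤ L)]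
  have hq2 : q ≤ q ^ 2 := by nlinarith
  have hlogd : 0 ≤ Real.log d := Real.log_nonneg hd
  have h1 : ((4 * (L + 1) : ℕ) : ℝ) + 1 ≤ Real.exp (q ^ 2) := by
    have : ((4 * (L + 1) : ℕ) : ℝ) + 1 = q := by rw [← hqN]; push_cast; ring
    rw [this]
    linarith [Real.add_one_le_exp (q ^ 2)]
  have h2 : (2 : ℝ) ^ ((4 * (L + 1) + 1) ^ 2) ≤ Real.exp (q ^ 2) := by
    have h2e : (2 : ℝ) ≤ Real.exp 1 := by linarith [Real.add_one_le_exp (1 : ℝ)]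
    calc (2 : ℝ) ^ ((4 * (L + 1) + 1) ^ 2) ≤ Real.exp 1 ^ ((4 * (L + 1) + 1) ^ 2) := by gcongr
      _ = Real.exp (q ^ 2) := by rw [← Real.exp_nat_mul, Nat.cast_pow, hqN, mul_one]
  have h3 : d ^ (4 * (L + 1) + 1) ≤ Real.exp (Real.log d * q ^ 2) := by
    calc d ^ (4 * (L + 1) + 1) = Real.exp (Real.log d * q) := by
          rw [← hqN, mul_comm (Real.log d), Real.exp_nat_mul, Real.exp_log (by linarith)]
      _ ≤ _ := by gcongr
  have h4 : Real.exp ((L : ℝ) ^ 3) ≤ n := by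
    rw [← Real.le_log_iff_exp_le hn']
    exact depth_pow_le n
  calc _ ≤ Real.exp (q ^ 2) * (Real.exp (q ^ 2) * Real.exp (Real.log d * q ^ 2)) /
        Real.exp ((L : ℝ) ^ 3) := by gcongr
    _ = _ := by rw [← Real.exp_add, ← Real.exp_add, ← Real.exp_sub]; congr 1; ring

/-- for `d ≥ 1`, any `d' > d` and any `ε > 0`, whp over `G ∼ G(n,d/n)` the
`d'`-branching value of every vertex of `G` is at most `ε log n`. -/
theorem stmt10 (d : ℝ) (hd : 1 ≤ d) (d' ε : ℝ) (hd' : d < d') (hε : 0 < ε) :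
    Filter.Tendsto (fun n : ℕ => erProb n (d / n) (fun G =>
        ∀ v : Fin n, branchingValue G d' v ≤ ε * Real.log n))
      Filter.atTop (nhds 1) := by
  -- an intermediate discount rate: short paths are controlled at rate `d₁`, and the gap between
  -- `d₁` and `d'` then takes care of the long ones
  set d₁ := (d + d') / 2 with hd₁
  have hdd₁ : d < d₁ := by rw [hd₁]; linarith
  have hd₁d' : d₁ < d' := by rw [hd₁]; linarith
  have h0 : 0 < d₁ := by linarith
  obtain ⟨B, -, hB⟩ := mgf_bound (r := d₁⁻¹) (t := 12 / ε) hd (inv_pos.2 h0)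
    (by rw [← div_eq_mul_inv]; exact (div_lt_one h0).2 hdd₁) (by positivity)
  have hlow : Tendsto (fun n : ℕ =>
      1 - Real.exp ((2 + Real.log d) * (4 * (depth n : ℝ) + 5) ^ 2 - (depth n : ℝ) ^ 3) -
        Real.exp (12 / ε + B) / n) atTop (nhds 1) := by
    have h1 := (tendsto_exp_cubic (2 + Real.log d)
      (by linarith [Real.log_nonneg hd])).comp depth_tendsto
    have h2 : Tendsto (fun n : ℕ => Real.exp (12 / ε + B) / n) atTop (nhds 0) :=
      tendsto_const_div_atTop_nhds_zero_nat _
    simpa using (h1.const_sub 1).sub h2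
  refine tendsto_of_tendsto_of_tendsto_of_le_of_le' hlow tendsto_const_nhds ?_ ?_
  · filter_upwards [eventually_ge_atTop ⌈d⌉₊, eventually_gt_atTop 0,
      depth_tendsto.eventually (eventually_pow_le hε ((one_lt_div h0).2 hd₁d'))] with n hn hn0 hL
    have hn0' : (0 : ℝ) < n := by exact_mod_cast hn0
    have hdn : d ≤ n := (Nat.le_ceil d).trans (by exact_mod_cast hn)
    have hp1 : d / n ≤ 1 := (div_le_one hn0').2 hdn
    have hL' : ε * Real.log n * d₁ ^ depth n ≤ d' ^ depth n := by
      have h1 : ε * Real.log n ≤ (d' / d₁) ^ depth n :=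
        (mul_le_mul_of_nonneg_left (log_le_depth_pow n) hε.le).trans hL
      rwa [div_pow, le_div_iff₀ (by positivity)] at h1
    have hfail := failure_le (y := ε * Real.log n) (t := 12 / ε) (B := B) hn0 hdn hd
      (by linarith) hd₁d'.le hL' (by positivity)
      (hB n (d / n) (by positivity) hp1 (by rw [mul_div_cancel₀ _ hn0'.ne']) (depth n))
    have hexp : n * Real.exp (12 / ε + B - 12 / ε * (ε * Real.log n / 6)) =
        Real.exp (12 / ε + B) / n := by
      have : 12 / ε * (ε * Real.log n / 6) = Real.log n + Real.log n := by field_simp; ring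
      rw [this, Real.exp_sub, Real.exp_add (Real.log n), Real.exp_log hn0']
      field_simp
    rw [hexp] at hfail
    have := dense_bound hn0 hd
    linarith
  · filter_upwards [eventually_ge_atTop ⌈d⌉₊, eventually_gt_atTop 0] with n hn hn0
    have hn0' : (0 : ℝ) < n := by exact_mod_cast hn0
    have hdn : d ≤ n := (Nat.le_ceil d).trans (by exact_mod_cast hn)
    exact erProb_le_one (by positivity) ((div_le_one hn0').2 hdn) _
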